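/- arXiv:2410.22264 — 8 statements merged into one kernel-verified Lean document; each statement's English description precedes it below -/
import Mathlib

section
/- Let d, k, T be positive integers with kT ≤ d, A* ∈ ℝ^{d×d}, and U_t* ∈ ℝ^{d×k} for t = 1,…,T satisfying the task-diversity assumption. If Â_SR ∈ ℝ^{d×d} minimizes the standard retraining objective A ↦ (1/2)·Σ_{t=1}^T ‖A* + U_t*(U_t*)ᵀ − A‖_F², then rank(Â_SR − A*) = kT. -/
open Matrix BigOperators

noncomputable section

/-- Squared Frobenius norm of a real matrix. -/
def frobSq {m n : Type*} [Fintype m] [Fintype n] (M : Matrix m n ℝ) : ℝ :=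
  ∑ i, ∑ j, (M i j) ^ 2

/-- Theorem 1 (standard retraining recovery error): if `Â_SR` minimizes the standard
retraining objective and the task-diversity assumption holds, then
`rank(Â_SR − A*) = kT`. -/
theorem standard_retraining_rank_error
    (d k T : ℕ) (hd : 0 < d) (hk : 0 < k) (hT : 0 < T) (hkT : k * T ≤ d)
    (Astar : Matrix (Fin d) (Fin d) ℝ)
    (Ustar : Fin T → Matrix (Fin d) (Fin k) ℝ)
    (hdiv : (Matrix.of fun i (p : Fin T × Fin k) => Ustar p.1 i p.2).rank = k * T)
    (Asr : Matrix (Fin d) (Fin d) ℝ)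
    (hmin : ∀ A : Matrix (Fin d) (Fin d) ℝ,
      (1 / 2) * ∑ t, frobSq (Astar + Ustar t * (Ustar t)ᵀ - Asr) ≤
        (1 / 2) * ∑ t, frobSq (Astar + Ustar t * (Ustar t)ᵀ - A)) :
    (Asr - Astar).rank = k * T := by
  have hT' : (T : ℝ) ≠ 0 := by positivity
  have hTp : (0 : ℝ) < T := by positivity
  set G : Fin T → Matrix (Fin d) (Fin d) ℝ := fun t => Ustar t * (Ustar t)ᵀ with hG
  set M : Matrix (Fin d) (Fin d) ℝ := (T : ℝ)⁻¹ • ∑ t, G t with hM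
  have hMe : ∀ i j, ∑ t, G t i j = T * M i j := by
    intro i j
    simp only [hM, Matrix.smul_apply, Matrix.sum_apply, smul_eq_mul]
    field_simp
  have swap : ∀ A : Matrix (Fin d) (Fin d) ℝ,
      ∑ t, frobSq (Astar + G t - A) = ∑ i, ∑ j, ∑ t, (Astar i j + G t i j - A i j) ^ 2 := by
    intro A
    simp only [frobSq, Matrix.sub_apply, Matrix.add_apply]
    rw [Finset.sum_comm]
    refine Finset.sum_congr rfl fun i _ => ?_
    rw [Finset.sum_comm]
  have key : ∀ i j, ∑ t, (Astar i j + G t i j - Asr i j) ^ 2 =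
      ∑ t, (Astar i j + G t i j - (Astar + M) i j) ^ 2
        + T * (M i j - (Asr i j - Astar i j)) ^ 2 := by
    intro i j
    have h1 : ∀ t, (Astar i j + G t i j - Asr i j) ^ 2 =
      (Astar i j + G t i j - (Astar + M) i j) ^ 2
        + (2 * (M i j - (Asr i j - Astar i j)) * G t i j +
          ((M i j - (Asr i j - Astar i j)) ^ 2
            - 2 * (M i j - (Asr i j - Astar i j)) * M i j)) := by
      intro t
      simp only [Matrix.add_apply]
      ring
    rw [Finset.sum_congr rfl fun t _ => h1 t, Finset.sum_add_distrib, Finset.sum_add_distrib,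
      ← Finset.mul_sum, hMe]
    simp only [Finset.sum_const, Finset.card_univ, Fintype.card_fin, nsmul_eq_mul]
    ring
  have h := hmin (Astar + M)
  change (1 / 2) * ∑ t, frobSq (Astar + G t - Asr) ≤
    (1 / 2) * ∑ t, frobSq (Astar + G t - (Astar + M)) at h
  rw [swap, swap] at h
  simp only [key, Finset.sum_add_distrib] at h
  have h0 : ∑ i, ∑ j, (T : ℝ) * (M i j - (Asr i j - Astar i j)) ^ 2 ≤ 0 := by linarith
  have hD : Asr - Astar = M := by
    ext i j
    have hnn : ∀ i j, 0 ≤ (T : ℝ) * (M i j - (Asr i j - Astar i j)) ^ 2 :=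
      fun i j => by positivity
    have h2 : (T : ℝ) * (M i j - (Asr i j - Astar i j)) ^ 2 ≤ 0 :=
      ((Finset.single_le_sum (f := fun j => (T : ℝ) * (M i j - (Asr i j - Astar i j)) ^ 2)
        (fun j _ => hnn i j) (Finset.mem_univ j)).trans
        (Finset.single_le_sum
          (f := fun i => ∑ j, (T : ℝ) * (M i j - (Asr i j - Astar i j)) ^ 2)
          (fun i _ => Finset.sum_nonneg fun j _ => hnn i j) (Finset.mem_univ i))).trans h0
    have h3 := le_antisymm h2 (hnn i j)
    have h4 : M i j - (Asr i j - Astar i j) = 0 := by simpa [hT'] using h3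
    rw [Matrix.sub_apply]
    linarith
  have hS : ∑ t, G t = (Matrix.of fun i (p : Fin T × Fin k) => Ustar p.1 i p.2) *
      (Matrix.of fun i (p : Fin T × Fin k) => Ustar p.1 i p.2)ᵀ := by
    ext i j
    simp [hG, Matrix.sum_apply, Matrix.mul_apply, Fintype.sum_prod_type]
  rw [hD, hM, Matrix.rank_smul_of_mem_nonZeroDivisors _
    (mem_nonZeroDivisors_of_ne_zero (inv_ne_zero hT')), hS, Matrix.rank_self_mul_transpose, hdiv]
end
end

section
/- Let d, k, T be positive integers with k(T+1) ≤ d, A* ∈ ℝ^{d×d}, and U_t* ∈ ℝ^{d×k} for t = 1,…,T+1 such that the d×(k(T+1)) matrix [U_1* ⋯ U_{T+1}*] has rank k(T+1). Set Â_SR = A* + (1/T)·Σ_{t=1}^T U_t*(U_t*)ᵀ. Then for every integer k' with 1 ≤ k' ≤ kT and every pair of matrices U, V ∈ ℝ^{d×k'}, the test loss 𝓛_Test(U, V; Â_SR) = (1/2)·‖A* + U_{T+1}*(U_{T+1}*)ᵀ − Â_SR − U Vᵀ‖_F² is strictly positive. -/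
open Matrix BigOperators

noncomputable section

/-- Corollary 1: after standard retraining, every adapter of rank `k' ≤ kT` incurs
strictly positive test loss on the held-out task. -/
theorem standard_retraining_positive_test_loss
    (d k T : ℕ) (hd : 0 < d) (hk : 0 < k) (hT : 0 < T) (hkT : k * (T + 1) ≤ d)
    (Astar : Matrix (Fin d) (Fin d) ℝ)
    (Ustar : Fin (T + 1) → Matrix (Fin d) (Fin k) ℝ)
    (hdiv : (Matrix.of fun i (p : Fin (T + 1) × Fin k) => Ustar p.1 i p.2).rank
        = k * (T + 1))
    (Asr : Matrix (Fin d) (Fin d) ℝ)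
    (hAsr : Asr = Astar + (T : ℝ)⁻¹ • ∑ t : Fin T, Ustar t.castSucc * (Ustar t.castSucc)ᵀ) :
    ∀ k' : ℕ, 1 ≤ k' → k' ≤ k * T →
      ∀ U V : Matrix (Fin d) (Fin k') ℝ,
        0 < (1 / 2) * frobSq
          (Astar + Ustar (Fin.last T) * (Ustar (Fin.last T))ᵀ - Asr - U * Vᵀ) := by
  intro k' _ hk' U V
  set W : Matrix (Fin d) (Fin (T + 1) × Fin k) ℝ :=
    Matrix.of fun i (p : Fin (T + 1) × Fin k) => Ustar p.1 i p.2 with hW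
  set D : (Fin (T + 1) × Fin k) → ℝ :=
    fun p => if p.1 = Fin.last T then 1 else -(T : ℝ)⁻¹ with hD
  have hTr : (T : ℝ) ≠ 0 := by exact_mod_cast hT.ne'
  have key : Astar + Ustar (Fin.last T) * (Ustar (Fin.last T))ᵀ - Asr
      = W * Matrix.diagonal D * Wᵀ := by
    rw [hAsr]
    ext i j
    rw [Matrix.mul_apply (M := W * Matrix.diagonal D)]
    simp only [Matrix.mul_diagonal D W]
    simp only [Matrix.sub_apply, Matrix.add_apply, Matrix.smul_apply, Matrix.sum_apply,
      Matrix.transpose_apply,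
      Fintype.sum_prod_type, Fin.sum_univ_castSucc, hW, hD, Matrix.of_apply,
      (Fin.castSucc_lt_last _).ne, if_true, if_false, Matrix.mul_apply, smul_eq_mul,
      Finset.mul_sum]
    have : ∀ a b c : ℝ, a + b - (a + c) = -c + b := by intros; ring
    rw [this, ← Finset.sum_neg_distrib]
    congr 1
    · refine Finset.sum_congr rfl fun t _ => ?_
      rw [← Finset.sum_neg_distrib]
      exact Finset.sum_congr rfl fun t _ => by ring
    · exact Finset.sum_congr rfl fun t _ => by ring
  have hnn : 0 ≤ frobSq (Astar + Ustar (Fin.last T) * (Ustar (Fin.last T))ᵀ - Asr - U * Vᵀ) :=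
    Finset.sum_nonneg fun i _ => Finset.sum_nonneg fun j _ => sq_nonneg _
  rcases hnn.lt_or_eq with h | h
  · linarith
  exfalso
  have hz : W * Matrix.diagonal D * Wᵀ = U * Vᵀ := by
    rw [← key, ← sub_eq_zero]
    ext i j
    have h1 := (Finset.sum_eq_zero_iff_of_nonneg
      (fun i _ => Finset.sum_nonneg fun j _ => sq_nonneg _)).1 h.symm i (Finset.mem_univ i)
    have h2 := (Finset.sum_eq_zero_iff_of_nonneg
      (fun j _ => sq_nonneg _)).1 h1 j (Finset.mem_univ j)
    exact pow_eq_zero_iff (two_ne_zero) |>.1 h2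
  have hcard : Fintype.card (Fin (T + 1) × Fin k) = k * (T + 1) := by
    simp [mul_comm]
  have hG : IsUnit (Wᵀ * W) := by
    have hr : (Wᵀ * W).rank = Fintype.card (Fin (T + 1) × Fin k) := by
      rw [Matrix.rank_transpose_mul_self, hdiv, hcard]
    rw [← Matrix.linearIndependent_rows_iff_isUnit, linearIndependent_iff_card_eq_finrank_span,
      ← hr, Matrix.rank_eq_finrank_span_row]
    rfl
  have hDu : IsUnit (Matrix.diagonal D) := by
    rw [Matrix.isUnit_diagonal, Pi.isUnit_iff]
    intro p
    simp only [hD]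
    split_ifs <;> simp [hTr]
  have hM := Matrix.rank_of_isUnit _ ((hG.mul hDu).mul hG)
  have e : Wᵀ * W * Matrix.diagonal D * (Wᵀ * W) = (Wᵀ * U) * (Vᵀ * W) := by
    calc _ = Wᵀ * (W * Matrix.diagonal D * Wᵀ) * W := by simp only [Matrix.mul_assoc]
      _ = _ := by rw [hz]; simp only [Matrix.mul_assoc]
  rw [e, hcard] at hM
  have h1 := Matrix.rank_mul_le_left (Wᵀ * U) (Vᵀ * W)
  have h2 := Matrix.rank_le_card_width (Wᵀ * U)
  rw [Fintype.card_fin] at h2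
  have : k * (T + 1) = k * T + k := by ring
  omega
end
end

section
/- Let d, k, T be positive integers (T ≥ 1), A* ∈ ℝ^{d×d}, and U_t* ∈ ℝ^{d×k} for t = 1,…,T+1. Suppose Â ∈ ℝ^{d×d} and Û_1,…,Û_T ∈ ℝ^{d×k} satisfy 𝓛(Â, Û_1,…,Û_T) = 0, where 𝓛 is the Meta-LoRA loss over tasks 1,…,T. Then there exist matrices U, V ∈ ℝ^{d×3k} such that 𝓛_Test(U, V; Â) = (1/2)·‖A* + U_{T+1}*(U_{T+1}*)ᵀ − Â − U Vᵀ‖_F² = 0. -/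
open Matrix BigOperators

noncomputable section

/-- Corollary 2: if the Meta-LoRA loss over tasks `1,…,T` vanishes at `(Â, Û)`, then
there is a rank-`3k` adapter achieving zero test loss on the held-out task `T+1`. -/
theorem metaLoRA_rank3k_adapter_zero_test_loss
    (d k T : ℕ) (hd : 0 < d) (hk : 0 < k) (hT : 0 < T)
    (Astar : Matrix (Fin d) (Fin d) ℝ)
    (Ustar : Fin (T + 1) → Matrix (Fin d) (Fin k) ℝ)
    (Ahat : Matrix (Fin d) (Fin d) ℝ)
    (Uhat : Fin T → Matrix (Fin d) (Fin k) ℝ)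
    (hloss : (1 / 2) * ∑ t : Fin T, frobSq
        (Astar + Ustar t.castSucc * (Ustar t.castSucc)ᵀ - Ahat - Uhat t * (Uhat t)ᵀ) = 0) :
    ∃ U V : Matrix (Fin d) (Fin (3 * k)) ℝ,
      (1 / 2) * frobSq
        (Astar + Ustar (Fin.last T) * (Ustar (Fin.last T))ᵀ - Ahat - U * Vᵀ) = 0 := by
  have hnn : ∀ M : Matrix (Fin d) (Fin d) ℝ, 0 ≤ frobSq M := fun M =>
    Finset.sum_nonneg fun i _ => Finset.sum_nonneg fun j _ => sq_nonneg _
  have h1 := (mul_eq_zero.mp hloss).resolve_left (by norm_num)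
  rw [Finset.sum_eq_zero_iff_of_nonneg (fun t _ => hnn _)] at h1
  have h2 := h1 ⟨0, hT⟩ (Finset.mem_univ _)
  generalize Ustar (Fin.castSucc ⟨0, hT⟩) = P at h2
  generalize Uhat ⟨0, hT⟩ = Q at h2
  generalize Ustar (Fin.last T) = R
  have h3 : ∀ i j, (Astar + P * Pᵀ - Ahat - Q * Qᵀ) i j = 0 := by
    intro i j
    have h4 := (Finset.sum_eq_zero_iff_of_nonneg
      (fun i _ => Finset.sum_nonneg fun j _ => sq_nonneg _)).mp h2 i (Finset.mem_univ _)
    have h6 := (Finset.sum_eq_zero_iff_of_nonneg (fun j _ => sq_nonneg _)).mp h4 j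
      (Finset.mem_univ _)
    exact (pow_eq_zero_iff two_ne_zero).mp h6
  refine ⟨Matrix.of fun i c => (![R, Q, P] (finProdFinEquiv.symm c).1) i (finProdFinEquiv.symm c).2,
    Matrix.of fun i c => (![R, Q, -P] (finProdFinEquiv.symm c).1) i (finProdFinEquiv.symm c).2, ?_⟩
  rw [mul_eq_zero]
  right
  unfold frobSq
  refine Finset.sum_eq_zero fun i _ => Finset.sum_eq_zero fun j _ => ?_
  rw [sq_eq_zero_iff]
  have h5 := h3 i j
  simp only [Matrix.sub_apply, Matrix.add_apply, Matrix.mul_apply, Matrix.transpose_apply,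
    Matrix.of_apply] at h5 ⊢
  rw [Equiv.sum_comp finProdFinEquiv.symm (fun p : Fin 3 × Fin k =>
    (![R, Q, P] p.1) i p.2 * (![R, Q, -P] p.1) j p.2), Fintype.sum_prod_type, Fin.sum_univ_three]
  have h7 : ∑ x, P i x * (-P) j x = -∑ x, P i x * P j x := by
    rw [← Finset.sum_neg_distrib]
    exact Finset.sum_congr rfl fun x _ => by rw [Matrix.neg_apply, mul_neg]
  change Astar i j + ∑ x, R i x * R j x - Ahat i j -
    (∑ x, R i x * R j x + ∑ x, Q i x * Q j x + ∑ x, P i x * (-P) j x) = 0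
  rw [h7]
  linarith
end
end

section
/- Let d, k, T be positive integers with T ≥ 3 and kT ≤ d, A* ∈ ℝ^{d×d}, and U_t* ∈ ℝ^{d×k} for t = 1,…,T satisfying the task-diversity assumption. Suppose Â ∈ ℝ^{d×d} and Û_1,…,Û_T ∈ ℝ^{d×k} satisfy 𝓛(Â, Û_1,…,Û_T) = 0, where 𝓛 is the Meta-LoRA loss. Then Â = A* and Û_t(Û_t)ᵀ = U_t*(U_t*)ᵀ for every t ∈ {1,…,T}. -/
open Matrix BigOperators

noncomputable section

theorem range_self_mul_transpose_aux {m n : Type*} [Fintype m] [Fintype n]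
    (A : Matrix m n ℝ) : LinearMap.range (A * Aᵀ).mulVecLin = LinearMap.range A.mulVecLin := by
  classical
  apply Submodule.eq_of_le_of_finrank_eq
  · rw [Matrix.mulVecLin_mul]
    exact LinearMap.range_comp_le_range _ _
  · exact Matrix.rank_self_mul_transpose A

theorem range_fromCols_aux {m n p : Type*} [Fintype m] [Fintype n] [Fintype p]
    (A : Matrix m n ℝ) (B : Matrix m p ℝ) :
    LinearMap.range (Matrix.fromCols A B).mulVecLin =
      LinearMap.range A.mulVecLin ⊔ LinearMap.range B.mulVecLin := by
  rw [Matrix.range_mulVecLin, Matrix.range_mulVecLin, Matrix.range_mulVecLin,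
    ← Submodule.span_union]
  congr 1
  ext x
  simp only [Set.mem_range, Set.mem_union, Sum.exists]
  rfl

theorem pair_aux {d k : ℕ} (Us Ut Vs Vt : Matrix (Fin d) (Fin k) ℝ)
    (C : Matrix (Fin d) (Fin d) ℝ)
    (hs : Us * Usᵀ = C + Vs * Vsᵀ) (ht : Ut * Utᵀ = C + Vt * Vtᵀ)
    (hrank : Module.finrank ℝ
      ↥(LinearMap.range Us.mulVecLin ⊔ LinearMap.range Ut.mulVecLin) = k + k) (x : Fin d → ℝ) :
    C *ᵥ x ∈ LinearMap.range Us.mulVecLin ⊔ LinearMap.range Ut.mulVecLin := by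
  have hA : Matrix.fromCols Us Vt * (Matrix.fromCols Us Vt)ᵀ
      = Matrix.fromCols Ut Vs * (Matrix.fromCols Ut Vs)ᵀ := by
    rw [Matrix.transpose_fromCols, Matrix.transpose_fromCols,
      Matrix.fromCols_mul_fromRows, Matrix.fromCols_mul_fromRows, hs, ht]
    abel
  have hr := range_self_mul_transpose_aux (Matrix.fromCols Us Vt)
  rw [hA, range_self_mul_transpose_aux, range_fromCols_aux] at hr
  have hr2 := range_fromCols_aux Us Vt
  have hle : LinearMap.range Us.mulVecLin ⊔ LinearMap.range Ut.mulVecLin ≤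
      LinearMap.range (Matrix.fromCols Us Vt).mulVecLin := by
    apply sup_le
    · rw [hr2]; exact le_sup_left
    · rw [← hr]; exact le_sup_left
  have hcard : (Matrix.fromCols Us Vt).rank ≤ k + k := by
    have := Matrix.rank_le_card_width (Matrix.fromCols Us Vt)
    simpa using this
  have heq := Submodule.eq_of_le_of_finrank_le hle (by rw [hrank]; exact hcard)
  have hC : C = Us * Usᵀ - Vs * Vsᵀ := by rw [hs]; abel
  rw [hC, Matrix.sub_mulVec]
  apply Submodule.sub_mem
  · apply Submodule.mem_sup_left
    rw [← Matrix.mulVec_mulVec]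
    exact ⟨_, rfl⟩
  · rw [heq, ← hr]
    apply Submodule.mem_sup_right
    rw [← Matrix.mulVec_mulVec]
    exact ⟨_, rfl⟩

theorem frobSq_eq_zero_aux {m n : Type*} [Fintype m] [Fintype n] (M : Matrix m n ℝ)
    (h : frobSq M = 0) : M = 0 := by
  unfold frobSq at h
  ext i j
  have h1 := (Finset.sum_eq_zero_iff_of_nonneg (s := Finset.univ)
    (f := fun i => ∑ j, (M i j) ^ 2)
    (fun i _ => Finset.sum_nonneg (fun j _ => sq_nonneg _))).1 h i (Finset.mem_univ _)
  have h2 := (Finset.sum_eq_zero_iff_of_nonneg (s := Finset.univ)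
    (f := fun j => (M i j) ^ 2) (fun j _ => sq_nonneg _)).1 h1 j (Finset.mem_univ _)
  exact (pow_eq_zero_iff two_ne_zero).1 h2

theorem frobSq_nonneg_aux {m n : Type*} [Fintype m] [Fintype n] (M : Matrix m n ℝ) :
    0 ≤ frobSq M :=
  Finset.sum_nonneg (fun _ _ => Finset.sum_nonneg (fun _ _ => sq_nonneg _))

/-- Theorem 3: with `T ≥ 3` tasks and task diversity, any zero of the Meta-LoRA loss
recovers the ground truth: `Â = A*` and `Ûₜ Ûₜᵀ = Uₜ* (Uₜ*)ᵀ` for all `t`. -/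
theorem metaLoRA_exact_recovery
    (d k T : ℕ) (hd : 0 < d) (hk : 0 < k) (hT : 3 ≤ T) (hkT : k * T ≤ d)
    (Astar : Matrix (Fin d) (Fin d) ℝ)
    (Ustar : Fin T → Matrix (Fin d) (Fin k) ℝ)
    (hdiv : (Matrix.of fun i (p : Fin T × Fin k) => Ustar p.1 i p.2).rank = k * T)
    (Ahat : Matrix (Fin d) (Fin d) ℝ)
    (Uhat : Fin T → Matrix (Fin d) (Fin k) ℝ)
    (hloss : (1 / 2) * ∑ t, frobSq
        (Astar + Ustar t * (Ustar t)ᵀ - Ahat - Uhat t * (Uhat t)ᵀ) = 0) :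
    Ahat = Astar ∧ ∀ t : Fin T, Uhat t * (Uhat t)ᵀ = Ustar t * (Ustar t)ᵀ := by
  have h0 : ∀ t, Astar + Ustar t * (Ustar t)ᵀ - Ahat - Uhat t * (Uhat t)ᵀ = 0 := by
    intro t
    apply frobSq_eq_zero_aux
    have h1 : ∑ t, frobSq
        (Astar + Ustar t * (Ustar t)ᵀ - Ahat - Uhat t * (Uhat t)ᵀ) = 0 := by linarith
    rw [Finset.sum_eq_zero_iff_of_nonneg (fun t _ => frobSq_nonneg_aux _)] at h1
    exact h1 t (Finset.mem_univ _)
  have h1 : ∀ t, Ustar t * (Ustar t)ᵀ = (Ahat - Astar) + Uhat t * (Uhat t)ᵀ := by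
    intro t
    rw [← sub_eq_zero, ← h0 t]
    abel
  let w : Fin T × Fin k → Fin d → ℝ := fun p i => Ustar p.1 i p.2
  have hli : LinearIndependent ℝ w := by
    rw [linearIndependent_iff_card_eq_finrank_span, Set.finrank]
    rw [Matrix.rank, Matrix.range_mulVecLin] at hdiv
    rw [Fintype.card_prod, Fintype.card_fin, Fintype.card_fin, mul_comm]
    exact hdiv.symm
  let R : Fin T → Submodule ℝ (Fin d → ℝ) := fun t => LinearMap.range (Ustar t).mulVecLin
  have hR : ∀ t, R t = Submodule.span ℝ (w '' {p | p.1 = t}) := by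
    intro t
    simp only [R]
    rw [Matrix.range_mulVecLin]
    congr 1
    ext x
    constructor
    · rintro ⟨j, rfl⟩
      exact ⟨(t, j), rfl, rfl⟩
    · rintro ⟨⟨t', j⟩, ht, rfl⟩
      cases ht
      exact ⟨j, rfl⟩
  have hRk : ∀ t, Module.finrank ℝ (R t) = k := by
    intro t
    have h2 : LinearIndependent ℝ (fun j : Fin k => w (t, j)) :=
      hli.comp (fun j : Fin k => (t, j)) (fun a b h => by simpa using h)
    have h3 := finrank_span_eq_card h2
    have h4 : R t = Submodule.span ℝ (Set.range fun j : Fin k => w (t, j)) :=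
      Matrix.range_mulVecLin _
    rw [Fintype.card_fin] at h3
    rw [h4]
    exact h3
  have hdis : ∀ s t, s ≠ t → Disjoint (R s) (R t) := by
    intro s t hst
    rw [hR, hR]
    apply hli.disjoint_span_image
    rw [Set.disjoint_left]
    rintro p hp hp'
    exact hst (hp.symm.trans hp')
  have hdis3 : ∀ r s t, r ≠ s → r ≠ t → Disjoint (R r) (R s ⊔ R t) := by
    intro r s t hrs hrt
    rw [hR, hR, hR, ← Submodule.span_union, ← Set.image_union]
    apply hli.disjoint_span_image
    rw [Set.disjoint_left]
    rintro p hp (hp' | hp')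
    · exact hrs (hp.symm.trans hp')
    · exact hrt (hp.symm.trans hp')
  have hpair : ∀ s t, s ≠ t → ∀ x, (Ahat - Astar) *ᵥ x ∈ R s ⊔ R t := by
    intro s t hst x
    refine pair_aux _ _ _ _ _ (h1 s) (h1 t) ?_ x
    have h2 := Submodule.finrank_sup_add_finrank_inf_eq (R s) (R t)
    rw [(hdis s t hst).eq_bot, finrank_bot, hRk, hRk] at h2
    exact h2
  have hC : Ahat - Astar = 0 := by
    let a : Fin T := ⟨0, by omega⟩
    let b : Fin T := ⟨1, by omega⟩
    let c : Fin T := ⟨2, by omega⟩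
    have hab : a ≠ b := by simp [a, b]
    have hac : a ≠ c := by simp [a, c]
    have hbc : b ≠ c := by simp [b, c]
    have hz : ∀ x, (Ahat - Astar) *ᵥ x = 0 := by
      intro x
      have hx1 := hpair a b hab x
      have hx2 := hpair a c hac x
      have hx3 := hpair b c hbc x
      have hxa : (Ahat - Astar) *ᵥ x ∈ R a := by
        obtain ⟨y, hy, z, hz, hyz⟩ := Submodule.mem_sup.1 hx1
        have hz2 : z ∈ R a ⊔ R c := by
          have : z = (Ahat - Astar) *ᵥ x - y := by rw [← hyz]; abel
          rw [this]
          exact Submodule.sub_mem _ hx2 (Submodule.mem_sup_left hy)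
        have hz0 := Submodule.disjoint_def.1 (hdis3 b a c hab.symm hbc) z hz hz2
        rw [← hyz, hz0, add_zero]
        exact hy
      exact Submodule.disjoint_def.1 (hdis3 a b c hab hac) _ hxa hx3
    apply Matrix.ext_of_mulVec_single
    intro i
    rw [hz, Matrix.zero_mulVec]
  refine ⟨sub_eq_zero.1 hC, fun t => ?_⟩
  rw [h1 t, hC, zero_add]
end
end

section
/- Let d, k be positive integers and U₁*, U₂*, Û₁, Û₂ ∈ ℝ^{d×k}. Define B₁ = (1/2)·(Û₁(Û₁)ᵀ − U₁*(U₁*)ᵀ − Û₂(Û₂)ᵀ + U₂*(U₂*)ᵀ) and assume B₁ Û₁ = 0 and B₁ Û₂ = 0. Then every eigenvector of the symmetric matrix Û₂(Û₂)ᵀ − Û₁(Û₁)ᵀ with nonzero eigenvalue λ is also an eigenvector of U₂*(U₂*)ᵀ − U₁*(U₁*)ᵀ with the same eigenvalue λ: i.e., if (Û₂(Û₂)ᵀ − Û₁(Û₁)ᵀ) z = λ z with λ ≠ 0, then (U₂*(U₂*)ᵀ − U₁*(U₁*)ᵀ) z = λ z. -/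
open Matrix

noncomputable section

/-- Corollary 4 (shared eigenvectors): at a first-order stationary point of the two-task
Meta-LoRA loss, every eigenvector of `Û₂Û₂ᵀ − Û₁Û₁ᵀ` with nonzero eigenvalue `λ` is an
eigenvector of `U₂*(U₂*)ᵀ − U₁*(U₁*)ᵀ` with the same eigenvalue. -/
theorem stationarity_shared_eigenvectors
    (d k : ℕ) (hd : 0 < d) (hk : 0 < k)
    (U₁s U₂s Uh₁ Uh₂ : Matrix (Fin d) (Fin k) ℝ)
    (B₁ : Matrix (Fin d) (Fin d) ℝ)
    (hB₁ : B₁ = ((1 : ℝ) / 2) • (Uh₁ * Uh₁ᵀ - U₁s * U₁sᵀ - Uh₂ * Uh₂ᵀ + U₂s * U₂sᵀ))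
    (h1 : B₁ * Uh₁ = 0) (h2 : B₁ * Uh₂ = 0) :
    ∀ (z : Fin d → ℝ) (lam : ℝ), lam ≠ 0 →
      (Uh₂ * Uh₂ᵀ - Uh₁ * Uh₁ᵀ).mulVec z = lam • z →
      (U₂s * U₂sᵀ - U₁s * U₁sᵀ).mulVec z = lam • z := by
  intro z lam hl hz
  have hBz : B₁.mulVec z = 0 := by
    have h : B₁.mulVec (lam • z) = 0 := by
      rw [← hz, Matrix.mulVec_mulVec, Matrix.mul_sub, ← Matrix.mul_assoc, ← Matrix.mul_assoc,
        h1, h2]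
      simp
    rw [Matrix.mulVec_smul] at h
    exact (smul_eq_zero.mp h).resolve_left hl
  have e : U₂s * U₂sᵀ - U₁s * U₁sᵀ = (2 : ℝ) • B₁ + (Uh₂ * Uh₂ᵀ - Uh₁ * Uh₁ᵀ) := by
    rw [hB₁, smul_smul]
    norm_num
    abel
  rw [e, Matrix.add_mulVec, Matrix.smul_mulVec, hBz, hz]
  simp
end
end

section
/- Let d, k be positive integers and U₁*, U₂*, Û₁, Û₂ ∈ ℝ^{d×k}. Define B₁ = (1/2)·(Û₁(Û₁)ᵀ − U₁*(U₁*)ᵀ − Û₂(Û₂)ᵀ + U₂*(U₂*)ᵀ) and assume B₁ Û₁ = 0, B₁ Û₂ = 0, and B₁ ≠ 0. Then the 2k columns of Û₁ and Û₂ are not linearly independent; equivalently, the d×2k concatenated matrix [Û₁ Û₂] has rank at most 2k − 1, i.e., dim(im(Û₁) + im(Û₂)) ≤ 2k − 1. -/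
open Matrix

noncomputable section

/-- Corollary 5 (dimension drop): at a first-order stationary point of the two-task
Meta-LoRA loss with nonzero loss (`B₁ ≠ 0`), the `2k` columns of `Û₁` and `Û₂` are not
linearly independent: `dim(im(Û₁) + im(Û₂)) ≤ 2k − 1`. -/
theorem stationarity_dimension_drop
    (d k : ℕ) (hd : 0 < d) (hk : 0 < k)
    (U₁s U₂s Uh₁ Uh₂ : Matrix (Fin d) (Fin k) ℝ)
    (B₁ : Matrix (Fin d) (Fin d) ℝ)
    (hB₁ : B₁ = ((1 : ℝ) / 2) • (Uh₁ * Uh₁ᵀ - U₁s * U₁sᵀ - Uh₂ * Uh₂ᵀ + U₂s * U₂sᵀ))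
    (h1 : B₁ * Uh₁ = 0) (h2 : B₁ * Uh₂ = 0) (hne : B₁ ≠ 0) :
    Module.finrank ℝ
        ↥(LinearMap.range Uh₁.mulVecLin ⊔ LinearMap.range Uh₂.mulVecLin) ≤
      2 * k - 1 := by
  by_contra hcon
  set S := LinearMap.range Uh₁.mulVecLin ⊔ LinearMap.range Uh₂.mulVecLin with hS
  have hSk : 2 * k ≤ Module.finrank ℝ S := by omega
  have hScop : LinearMap.range (Uh₁.mulVecLin.coprod Uh₂.mulVecLin) = S :=
    LinearMap.range_coprod _ _
  have hrn := LinearMap.finrank_range_add_finrank_ker (Uh₁.mulVecLin.coprod Uh₂.mulVecLin)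
  rw [hScop] at hrn
  simp only [Module.finrank_prod, Module.finrank_fin_fun] at hrn
  have hker : LinearMap.ker (Uh₁.mulVecLin.coprod Uh₂.mulVecLin) = ⊥ := by
    apply Submodule.finrank_eq_zero.mp
    omega
  have hinj : ∀ a b : Fin k → ℝ, Uh₁ *ᵥ a + Uh₂ *ᵥ b = 0 → a = 0 ∧ b = 0 := by
    intro a b hab
    have hm : (a, b) ∈ LinearMap.ker (Uh₁.mulVecLin.coprod Uh₂.mulVecLin) := by
      simpa using hab
    rw [hker] at hm
    simpa using hm
  have hmem : ∀ v, v ∈ S ↔ ∃ a b : Fin k → ℝ, Uh₁ *ᵥ a + Uh₂ *ᵥ b = v := by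
    intro v
    rw [← hScop]
    simp
  have hBS : ∀ v ∈ S, B₁ *ᵥ v = 0 := by
    intro v hv
    obtain ⟨a, b, rfl⟩ := (hmem v).1 hv
    rw [mulVec_add, mulVec_mulVec, mulVec_mulVec, h1, h2]
    simp
  set M := U₁s * U₁sᵀ - U₂s * U₂sᵀ with hM
  have hMB : M = Uh₁ * Uh₁ᵀ - Uh₂ * Uh₂ᵀ - (2 : ℝ) • B₁ := by
    rw [hB₁, smul_smul, hM]
    norm_num
    abel
  have hMv : ∀ v, M *ᵥ v =
      Uh₁ *ᵥ (Uh₁ᵀ *ᵥ v) + Uh₂ *ᵥ (-(Uh₂ᵀ *ᵥ v)) - (2 : ℝ) • (B₁ *ᵥ v) := by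
    intro v
    rw [hMB, sub_mulVec, sub_mulVec, smul_mulVec, mulVec_neg, mulVec_mulVec, mulVec_mulVec]
    abel
  have hMS : S.map M.mulVecLin ≤ S := by
    rintro _ ⟨v, hv, rfl⟩
    rw [mulVecLin_apply, hMv, hBS v hv, smul_zero, sub_zero]
    exact (hmem _).2 ⟨_, _, rfl⟩
  have hdisj : Disjoint S (LinearMap.ker M.mulVecLin) := by
    rw [Submodule.disjoint_def]
    intro v hv hk0
    rw [LinearMap.mem_ker, mulVecLin_apply, hMv, hBS v hv, smul_zero, sub_zero] at hk0
    obtain ⟨e1, e2⟩ := hinj _ _ hk0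
    rw [neg_eq_zero] at e2
    obtain ⟨a, b, hab⟩ := (hmem v).1 hv
    have : v ⬝ᵥ v = 0 := by
      nth_rewrite 2 [← hab]
      rw [dotProduct_add, dotProduct_mulVec, dotProduct_mulVec, ← mulVec_transpose,
        ← mulVec_transpose, e1, e2]
      simp
    exact dotProduct_self_eq_zero.mp this
  have hfr : Module.finrank ℝ (S.map M.mulVecLin) = Module.finrank ℝ S := by
    have hi : Function.Injective (M.mulVecLin.domRestrict S) := by
      rw [← LinearMap.ker_eq_bot, LinearMap.ker_eq_bot']
      intro m hm
      exact Subtype.ext (Submodule.disjoint_def.1 hdisj m m.2 hm)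
    rw [← LinearMap.range_domRestrict]
    exact LinearMap.finrank_range_of_inj hi
  have hrM : Module.finrank ℝ (LinearMap.range M.mulVecLin) ≤ 2 * k := by
    have hle : LinearMap.range M.mulVecLin ≤
        LinearMap.range (U₁s.mulVecLin.coprod U₂s.mulVecLin) := by
      rintro _ ⟨v, rfl⟩
      refine ⟨(U₁sᵀ *ᵥ v, -(U₂sᵀ *ᵥ v)), ?_⟩
      rw [LinearMap.coprod_apply, mulVecLin_apply, mulVecLin_apply, mulVecLin_apply, hM, sub_mulVec,
        mulVec_neg, mulVec_mulVec, mulVec_mulVec, sub_eq_add_neg]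
    have e1 := Submodule.finrank_mono hle
    have e2 := LinearMap.finrank_range_le (U₁s.mulVecLin.coprod U₂s.mulVecLin)
    simp only [Module.finrank_prod, Module.finrank_fin_fun] at e2
    omega
  have hmapS : S.map M.mulVecLin = S := Submodule.eq_of_le_of_finrank_eq hMS hfr
  have hSr : S ≤ LinearMap.range M.mulVecLin := by
    rw [← hmapS]
    exact LinearMap.map_le_range
  have hSeq : S = LinearMap.range M.mulVecLin :=
    Submodule.eq_of_le_of_finrank_le hSr (hrM.trans hSk)
  have hBv : ∀ v, B₁ *ᵥ v ∈ S := by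
    intro v
    have m1 : M *ᵥ v ∈ S := by
      rw [hSeq]
      exact ⟨v, rfl⟩
    have m2 : Uh₁ *ᵥ (Uh₁ᵀ *ᵥ v) + Uh₂ *ᵥ (-(Uh₂ᵀ *ᵥ v)) ∈ S := (hmem _).2 ⟨_, _, rfl⟩
    have m3 := S.smul_mem (1 / 2 : ℝ) (S.sub_mem m2 m1)
    rw [hMv, sub_sub_cancel, smul_smul] at m3
    norm_num at m3
    exact m3
  have hsym : B₁ᵀ = B₁ := by
    rw [hB₁]
    simp [transpose_mul]
  apply hne
  apply Matrix.ext_of_mulVec_single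
  intro i
  rw [zero_mulVec]
  apply dotProduct_self_eq_zero.mp
  rw [dotProduct_mulVec, ← mulVec_transpose, hsym, hBS _ (hBv _), zero_dotProduct]
end
end

section
/- Let d, k be positive integers with 2k ≤ d, and let U₁*, U₂*, Û₁, Û₂ ∈ ℝ^{d×k} be such that the concatenated matrix [U₁* U₂*] has rank 2k. Define B₁ = (1/2)·(Û₁(Û₁)ᵀ − U₁*(U₁*)ᵀ − Û₂(Û₂)ᵀ + U₂*(U₂*)ᵀ). If B₁ is positive semidefinite, then rank(Û₁) = k. -/
open Matrix

noncomputable section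

/-- Lemma 7 (full rank of the adapters): under task diversity, if the stationarity
matrix `B₁` is positive semidefinite then `rank(Û₁) = k`. -/
theorem stationarity_full_rank
    (d k : ℕ) (hd : 0 < d) (hk : 0 < k) (hkd : 2 * k ≤ d)
    (U₁s U₂s Uh₁ Uh₂ : Matrix (Fin d) (Fin k) ℝ)
    (hdiv : (Matrix.fromCols U₁s U₂s).rank = 2 * k)
    (B₁ : Matrix (Fin d) (Fin d) ℝ)
    (hB₁ : B₁ = ((1 : ℝ) / 2) • (Uh₁ * Uh₁ᵀ - U₁s * U₁sᵀ - Uh₂ * Uh₂ᵀ + U₂s * U₂sᵀ))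
    (hpsd : B₁.PosSemidef) :
    Uh₁.rank = k := by
  have key : ∀ x : Fin d → ℝ, Uh₁ᵀ *ᵥ x = 0 → U₂sᵀ *ᵥ x = 0 → U₁sᵀ *ᵥ x = 0 := by
    intro x h1 h2
    have h := hpsd.dotProduct_mulVec_nonneg x
    have e : ∀ A : Matrix (Fin d) (Fin k) ℝ,
        x ⬝ᵥ ((A * Aᵀ) *ᵥ x) = (Aᵀ *ᵥ x) ⬝ᵥ (Aᵀ *ᵥ x) := by
      intro A
      rw [← Matrix.mulVec_mulVec, Matrix.dotProduct_mulVec, ← Matrix.mulVec_transpose]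
    rw [hB₁] at h
    simp only [star_trivial, Matrix.smul_mulVec, Matrix.add_mulVec, Matrix.sub_mulVec,
      dotProduct_smul, dotProduct_add, dotProduct_sub, e, h1, h2, smul_eq_mul,
      zero_dotProduct] at h
    have n1 : 0 ≤ (U₁sᵀ *ᵥ x) ⬝ᵥ (U₁sᵀ *ᵥ x) :=
      Finset.sum_nonneg fun i _ => mul_self_nonneg _
    have n2 : 0 ≤ (Uh₂ᵀ *ᵥ x) ⬝ᵥ (Uh₂ᵀ *ᵥ x) :=
      Finset.sum_nonneg fun i _ => mul_self_nonneg _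
    exact dotProduct_self_eq_zero.1 (by linarith)
  have hle : (Matrix.fromCols U₁s U₂s).rank ≤ (Matrix.fromCols Uh₁ U₂s).rank := by
    rw [← Matrix.rank_transpose, ← Matrix.rank_transpose (Matrix.fromCols Uh₁ U₂s)]
    unfold Matrix.rank
    have a := LinearMap.finrank_range_add_finrank_ker (Matrix.fromCols U₁s U₂s)ᵀ.mulVecLin
    have b := LinearMap.finrank_range_add_finrank_ker (Matrix.fromCols Uh₁ U₂s)ᵀ.mulVecLin
    have c : LinearMap.ker (Matrix.fromCols Uh₁ U₂s)ᵀ.mulVecLin ≤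
        LinearMap.ker (Matrix.fromCols U₁s U₂s)ᵀ.mulVecLin := by
      intro x hx
      rw [LinearMap.mem_ker, Matrix.mulVecLin_apply, Matrix.transpose_fromCols,
        Matrix.fromRows_mulVec] at hx ⊢
      have h1 : Uh₁ᵀ *ᵥ x = 0 := by
        funext i; exact congrFun hx (Sum.inl i)
      have h2 : U₂sᵀ *ᵥ x = 0 := by
        funext i; exact congrFun hx (Sum.inr i)
      rw [key x h1 h2, h2]
      funext i; cases i <;> rfl
    have c' := Submodule.finrank_mono c
    omega
  have hsum : (Matrix.fromCols Uh₁ U₂s).rank ≤ Uh₁.rank + U₂s.rank := by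
    unfold Matrix.rank
    have c : LinearMap.range (Matrix.fromCols Uh₁ U₂s).mulVecLin ≤
        LinearMap.range Uh₁.mulVecLin + LinearMap.range U₂s.mulVecLin := by
      rintro _ ⟨v, rfl⟩
      rw [Matrix.mulVecLin_apply, Matrix.fromCols_mulVec]
      exact Submodule.add_mem_sup ⟨_, rfl⟩ ⟨_, rfl⟩
    exact (Submodule.finrank_mono c).trans (Submodule.finrank_add_le_finrank_add_finrank _ _)
  have u1 := Matrix.rank_le_width Uh₁
  have u2 := Matrix.rank_le_width U₂s
  omega
end
end

section
/- Let d = 2, k = 1, T = 2, A* = 0 ∈ ℝ^{2×2}, u₁* = e₁ and u₂* = e₂ (the standard basis vectors of ℝ²). For every θ ∈ ℝ, set u₁(θ) = (cosh θ, sinh θ)ᵀ, u₂(θ) = (sinh θ, cosh θ)ᵀ, and A(θ) = (1/2)·(I₂ − u₁(θ)u₁(θ)ᵀ − u₂(θ)u₂(θ)ᵀ). Then the two-task Meta-LoRA loss satisfies 𝓛(A(θ), u₁(θ), u₂(θ)) = 0 for every θ ∈ ℝ, and the map θ ↦ A(θ) is injective; in particular, the set of global minimizers of 𝓛 is infinite.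 -/
open Matrix BigOperators

noncomputable section

/-- Non-uniqueness of global minima for `T = 2`: with `d = 2`, `k = 1`, `A* = 0`,
`u₁* = e₁`, `u₂* = e₂`, the hyperbola
`u₁(θ) = (cosh θ, sinh θ)`, `u₂(θ) = (sinh θ, cosh θ)`,
`A(θ) = (1/2)(I₂ − u₁(θ)u₁(θ)ᵀ − u₂(θ)u₂(θ)ᵀ)` consists of global minimizers of the
two-task Meta-LoRA loss: the loss is `0` along it, `θ ↦ A(θ)` is injective, and the set
of global minimizers is infinite. -/
theorem metaLoRA_two_task_nonunique_minima
    (L : Matrix (Fin 2) (Fin 2) ℝ × (Fin 2 → ℝ) × (Fin 2 → ℝ) → ℝ)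
    (hL : ∀ p, L p = (1 / 2) *
      (frobSq ((0 : Matrix (Fin 2) (Fin 2) ℝ) + vecMulVec ![(1 : ℝ), 0] ![(1 : ℝ), 0]
          - p.1 - vecMulVec p.2.1 p.2.1) +
       frobSq ((0 : Matrix (Fin 2) (Fin 2) ℝ) + vecMulVec ![(0 : ℝ), 1] ![(0 : ℝ), 1]
          - p.1 - vecMulVec p.2.2 p.2.2)))
    (u₁ u₂ : ℝ → Fin 2 → ℝ)
    (hu₁ : ∀ θ, u₁ θ = ![Real.cosh θ, Real.sinh θ])
    (hu₂ : ∀ θ, u₂ θ = ![Real.sinh θ, Real.cosh θ])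
    (A : ℝ → Matrix (Fin 2) (Fin 2) ℝ)
    (hA : ∀ θ, A θ = ((1 : ℝ) / 2) •
      ((1 : Matrix (Fin 2) (Fin 2) ℝ) - vecMulVec (u₁ θ) (u₁ θ) - vecMulVec (u₂ θ) (u₂ θ))) :
    (∀ θ : ℝ, L (A θ, u₁ θ, u₂ θ) = 0) ∧
    Function.Injective A ∧
    {p : Matrix (Fin 2) (Fin 2) ℝ × (Fin 2 → ℝ) × (Fin 2 → ℝ) |
        ∀ q, L p ≤ L q}.Infinite := by
  have h0 : ∀ θ : ℝ, L (A θ, u₁ θ, u₂ θ) = 0 := by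
    intro θ
    have hc := Real.cosh_sq θ
    rw [hL]
    simp only [hA, hu₁, hu₂, frobSq, Fin.sum_univ_two, vecMulVec_apply, Matrix.add_apply,
      Matrix.sub_apply, Matrix.smul_apply, Matrix.zero_apply, Matrix.one_apply, smul_eq_mul,
      Matrix.cons_val_zero, Matrix.cons_val_one]
    norm_num
    ring_nf
    have h4 : Real.cosh θ ^ 4 = (Real.sinh θ ^ 2 + 1) ^ 2 := by rw [← hc]; ring
    simp only [h4, hc]
    ring
  have hinj : Function.Injective A := by
    intro a b hab
    have h := congrFun (congrFun hab 0) 1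
    simp only [hA, hu₁, hu₂, vecMulVec_apply,
      Matrix.sub_apply, Matrix.smul_apply, Matrix.one_apply, smul_eq_mul,
      Matrix.cons_val_zero, Matrix.cons_val_one] at h
    norm_num at h
    have h2 : Real.sinh (2 * a) = Real.sinh (2 * b) := by
      rw [Real.sinh_two_mul, Real.sinh_two_mul]; linarith
    have := Real.sinh_injective h2
    linarith
  refine ⟨h0, hinj, ?_⟩
  refine Set.infinite_of_injective_forall_mem (f := fun θ : ℝ => (A θ, u₁ θ, u₂ θ)) ?_ ?_
  · intro a b hab
    exact hinj (congrArg Prod.fst hab)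
  · intro θ q
    rw [h0, hL]
    unfold frobSq
    positivity
end
end
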